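/- Let 0 ≤ s < t ≤ T and m, n ≥ 1 be integers, and let f : Λ^m_{s,t} → ℝ and g : Λ^n_{s,t} → ℝ be Lebesgue-integrable. Then (∫_{Λ^m_{s,t}} f(u) du) · (∫_{Λ^n_{s,t}} g(u) du) = Σ_{σ ∈ S(m,n)} ∫_{Λ^{m+n}_{s,t}} f(u_{σ(1)}, …, u_{σ(m)}) g(u_{σ(m+1)}, …, u_{σ(m+n)}) du₁ ⋯ du_{m+n}. -/

import Mathlib

open MeasureTheory

/-- The open simplex `Λ^m_{s,t} = {u ∈ ℝ^m : s < u₁ < ⋯ < u_m < t}`. -/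
def simplexSet (m : ℕ) (s t : ℝ) : Set (Fin m → ℝ) :=
  {u | StrictMono u ∧ ∀ i, u i ∈ Set.Ioo s t}

/-!
Almost every point of a cube has distinct coordinates, hence is sorted by exactly one permutation.
So the integral of a function over the cube is the sum, over all permutations `σ`, of the integrals
of `u ↦ F (u ∘ σ)` over the simplex of increasing points. By Fubini the left-hand side is such an
integral, with `F` supported on the product of two simplices, and for increasing `u` the point
`u ∘ σ` lies in that product exactly when `σ` is a shuffle.

Working with the powers of an arbitrary diffuse measure absorbs the interval `(s, t)` into the
measure.
-/

section Permutations

lemma eq_of_strictMono_comp_perm {k : ℕ} {α : Type*} [PartialOrder α] {v : Fin k → α}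
    {σ τ : Equiv.Perm (Fin k)} (hσ : StrictMono (v ∘ σ)) (hτ : StrictMono (v ∘ τ)) : σ = τ := by
  have hv : Function.Injective v := (Equiv.injective_comp σ v).1 hσ.injective
  exact Equiv.ext fun i => hv (congrFun (Tuple.unique_monotone hσ.monotone hτ.monotone) i)

lemma strictMono_comp_sort {k : ℕ} {α : Type*} [LinearOrder α] {v : Fin k → α}
    (hv : Function.Injective v) : StrictMono (v ∘ Tuple.sort v) :=
  (Tuple.monotone_sort v).strictMono_of_injective (hv.comp (Tuple.sort v).injective)

lemma strictMono_comp_iff {ι κ α : Type*} [Preorder ι] [LinearOrder κ] [Preorder α] {u : κ → α}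
    (hu : StrictMono u) {p : ι → κ} : StrictMono (u ∘ p) ↔ StrictMono p := by
  simp only [StrictMono, Function.comp_apply, hu.lt_iff_lt]

/-- Membership in the set `S(m, n)` of shuffles: `σ` is increasing on the first `m` and on the last
`n` indices. -/
abbrev IsShuffle {m n : ℕ} (σ : Equiv.Perm (Fin (m + n))) : Prop :=
  StrictMono (σ ∘ Fin.castAdd n) ∧ StrictMono (σ ∘ Fin.natAdd m)

variable {E F G : Type*} [NormedAddCommGroup E] [NormedSpace ℝ E]
  [NormedAddCommGroup F] [NormedSpace ℝ F] [NormedAddCommGroup G] [NormedSpace ℝ G]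

open Classical in
lemma bilin_indicator_strictMono_comp {α : Type*} [Preorder α] (B : E →L[ℝ] F →L[ℝ] G)
    {m n : ℕ} (f : (Fin m → α) → E) (g : (Fin n → α) → F) {u : Fin (m + n) → α}
    (hu : StrictMono u) (σ : Equiv.Perm (Fin (m + n))) :
    B ({v | StrictMono v}.indicator f (u ∘ σ ∘ Fin.castAdd n))
        ({v | StrictMono v}.indicator g (u ∘ σ ∘ Fin.natAdd m)) =
      if IsShuffle σ then B (f (u ∘ σ ∘ Fin.castAdd n)) (g (u ∘ σ ∘ Fin.natAdd m)) else 0 := by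
  simp only [Set.indicator_apply, Set.mem_ofPred_eq, strictMono_comp_iff hu, IsShuffle]
  split_ifs <;> simp_all

end Permutations

section PowerMeasure

variable {α : Type*} [MeasurableSpace α]

lemma ae_pi_injective {ι : Type*} [Fintype ι] [MeasurableEq α] (μ : ι → Measure α)
    [∀ i, SigmaFinite (μ i)] [∀ i, NullSingletonClass (μ i)] :
    ∀ᵐ v ∂Measure.pi μ, Function.Injective v := by
  classical
  have hne (i j : ι) (hij : i ≠ j) : ∀ᵐ v ∂Measure.pi μ, v i ≠ v j := by
    -- For a fixed value of `v j`, the points with `v i = v j` form a null hyperplane.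
    have hprod := measurePreserving_piEquivPiSubtypeProd μ (· = j)
    refine hprod.quasiMeasurePreserving.ae (p := fun z => z.2 ⟨i, hij⟩ ≠ z.1 ⟨j, rfl⟩) ?_
    have hmeas : MeasurableSet {z : ({k // k = j} → α) × ({k // k ≠ j} → α) |
        z.2 ⟨i, hij⟩ ≠ z.1 ⟨j, rfl⟩} :=
      (measurableSet_eq_fun (by fun_prop) (by fun_prop)).compl
    refine (Measure.ae_prod_iff_ae_ae hmeas).2 ?_
    exact Filter.Eventually.of_forall fun x => Measure.ae_eval_ne _ _ _
  have hall : ∀ᵐ v ∂Measure.pi μ, ∀ i j, i ≠ j → v i ≠ v j := by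
    simpa only [ae_all_iff] using hne
  filter_upwards [hall] with v hv i j hij
  exact not_imp_not.1 (hv i j) hij

lemma measurePreserving_arrowCongr'_refl {ι κ : Type*} [Fintype ι] [Fintype κ] (μ : Measure α)
    [SigmaFinite μ] (e : ι ≃ κ) :
    MeasurePreserving (MeasurableEquiv.arrowCongr' e (.refl α))
      (Measure.pi fun _ => μ) (Measure.pi fun _ => μ) :=
  measurePreserving_arrowCongr' _ _ e (.refl α) fun _ => .id μ

/-- Splitting an `(m + n)`-tuple into its first `m` and its last `n` coordinates. -/
def finAddArrowEquivProd (m n : ℕ) (α : Type*) [MeasurableSpace α] :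
    (Fin (m + n) → α) ≃ᵐ (Fin m → α) × (Fin n → α) :=
  (MeasurableEquiv.arrowCongr' finSumFinEquiv.symm (.refl α)).trans
    (MeasurableEquiv.sumPiEquivProdPi fun _ => α)

lemma measurePreserving_finAddArrowEquivProd (m n : ℕ) (μ : Measure α) [SigmaFinite μ] :
    MeasurePreserving (finAddArrowEquivProd m n α)
      (Measure.pi fun _ => μ) ((Measure.pi fun _ => μ).prod (Measure.pi fun _ => μ)) :=
  (measurePreserving_arrowCongr'_refl μ finSumFinEquiv.symm).trans
    (measurePreserving_sumPiEquivProdPi fun _ => μ)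

lemma setIntegral_strictMono_comp_symm {k : ℕ} [Preorder α] {E : Type*} [NormedAddCommGroup E]
    [NormedSpace ℝ E] (μ : Measure α) [SigmaFinite μ] (F : (Fin k → α) → E)
    (σ : Equiv.Perm (Fin k)) :
    ∫ v in {v | StrictMono (v ∘ σ.symm)}, F v ∂Measure.pi (fun _ => μ) =
      ∫ u in {u | StrictMono u}, F (u ∘ σ) ∂Measure.pi (fun _ => μ) := by
  let e : (Fin k → α) ≃ᵐ (Fin k → α) := .arrowCongr' σ.symm (.refl α)
  have he (u : Fin k → α) : e u = u ∘ σ := rfl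
  have hpre : e ⁻¹' {v | StrictMono (v ∘ σ.symm)} = {u | StrictMono u} := by
    ext u
    simp only [Set.mem_preimage, Set.mem_ofPred_eq, he, Function.comp_assoc,
      Equiv.self_comp_symm, Function.comp_id]
  rw [← (measurePreserving_arrowCongr'_refl μ σ.symm).setIntegral_preimage_emb
    e.measurableEmbedding, hpre]
  rfl

variable {μ : Measure α} [SigmaFinite μ] {m n : ℕ} {E F G : Type*}
  [NormedAddCommGroup E] [NormedSpace ℝ E]
  [NormedAddCommGroup F] [NormedSpace ℝ F] [NormedAddCommGroup G] [NormedSpace ℝ G]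

lemma integrable_pi_fin_add_bilin (B : E →L[ℝ] F →L[ℝ] G) {f : (Fin m → α) → E}
    {g : (Fin n → α) → F} (hf : Integrable f (Measure.pi fun _ => μ))
    (hg : Integrable g (Measure.pi fun _ => μ)) :
    Integrable (fun v => B (f (v ∘ Fin.castAdd n)) (g (v ∘ Fin.natAdd m)))
      (Measure.pi fun _ => μ) :=
  (measurePreserving_finAddArrowEquivProd m n μ).integrable_comp_of_integrable
    (hf.op_fst_snd (op := fun x y => B x y) (by fun_prop) ⟨‖B‖, B.le_opNorm₂⟩ hg)

lemma integral_pi_fin_add_bilin [CompleteSpace E] [CompleteSpace F] [CompleteSpace G]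
    (B : E →L[ℝ] F →L[ℝ] G) {f : (Fin m → α) → E} {g : (Fin n → α) → F}
    (hf : Integrable f (Measure.pi fun _ => μ)) (hg : Integrable g (Measure.pi fun _ => μ)) :
    ∫ v, B (f (v ∘ Fin.castAdd n)) (g (v ∘ Fin.natAdd m)) ∂Measure.pi (fun _ => μ) =
      B (∫ u, f u ∂Measure.pi fun _ => μ) (∫ u, g u ∂Measure.pi fun _ => μ) := by
  rw [← integral_prod_bilin B hf hg]
  exact (measurePreserving_finAddArrowEquivProd m n μ).integral_comp' fun z => B (f z.1) (g z.2)

end PowerMeasure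

section IncreasingPoints

variable {α : Type*} [LinearOrder α] [TopologicalSpace α] [OrderClosedTopology α]
  [SecondCountableTopology α] [MeasurableSpace α] [OpensMeasurableSpace α]

lemma measurableSet_setOf_strictMono {ι : Type*} [Countable ι] [Preorder ι] :
    MeasurableSet {u : ι → α | StrictMono u} := by
  have h : {u : ι → α | StrictMono u} = ⋂ i, ⋂ j, ⋂ _ : i < j, {u | u i < u j} := by
    ext u
    simp only [StrictMono, Set.mem_iInter, Set.mem_ofPred_eq]
  rw [h]
  exact .iInter fun i => .iInter fun j => .iInter fun _ =>
    measurableSet_lt (measurable_pi_apply i) (measurable_pi_apply j)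

variable (μ : Measure α) [SigmaFinite μ] [NullSingletonClass μ]

lemma integral_pi_eq_sum_perm {k : ℕ} {E : Type*} [NormedAddCommGroup E] [NormedSpace ℝ E]
    {F : (Fin k → α) → E} (hF : Integrable F (Measure.pi fun _ => μ)) :
    ∫ v, F v ∂Measure.pi (fun _ => μ) =
      ∑ σ : Equiv.Perm (Fin k), ∫ u in {u | StrictMono u}, F (u ∘ σ) ∂Measure.pi (fun _ => μ) := by
  let A (σ : Equiv.Perm (Fin k)) : Set (Fin k → α) := {v | StrictMono (v ∘ σ.symm)}
  have hA (σ) : MeasurableSet (A σ) :=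
    (MeasurableEquiv.arrowCongr' σ (.refl α)).measurable measurableSet_setOf_strictMono
  have hdisj : Pairwise (Function.onFun Disjoint A) := fun σ τ hne =>
    Set.disjoint_left.2 fun v hσ hτ =>
      hne (Equiv.symm_bijective.injective (eq_of_strictMono_comp_perm hσ hτ))
  have hcover : ⋃ σ, A σ =ᵐ[Measure.pi fun _ => μ] Set.univ := by
    rw [Filter.eventuallyEq_univ]
    filter_upwards [ae_pi_injective fun _ => μ] with v hv
    exact Set.mem_iUnion.2 ⟨(Tuple.sort v).symm, strictMono_comp_sort hv⟩
  calc ∫ v, F v ∂Measure.pi (fun _ => μ)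
    _ = ∫ v in ⋃ σ, A σ, F v ∂Measure.pi (fun _ => μ) := by
      rw [setIntegral_congr_set hcover, setIntegral_univ]
    _ = ∑ σ, ∫ v in A σ, F v ∂Measure.pi (fun _ => μ) :=
      integral_iUnion_fintype hA hdisj fun _ => hF.integrableOn
    _ = _ := Finset.sum_congr rfl fun σ _ => setIntegral_strictMono_comp_symm μ F σ

variable {E F G : Type*} [NormedAddCommGroup E] [NormedSpace ℝ E] [CompleteSpace E]
  [NormedAddCommGroup F] [NormedSpace ℝ F] [CompleteSpace F]
  [NormedAddCommGroup G] [NormedSpace ℝ G] [CompleteSpace G]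

open Classical in
theorem integral_simplex_mul_integral_simplex_eq_sum_shuffles_general (B : E →L[ℝ] F →L[ℝ] G)
    {m n : ℕ} {f : (Fin m → α) → E} {g : (Fin n → α) → F}
    (hf : IntegrableOn f {u | StrictMono u} (Measure.pi fun _ => μ))
    (hg : IntegrableOn g {u | StrictMono u} (Measure.pi fun _ => μ)) :
    B (∫ u in {u | StrictMono u}, f u ∂Measure.pi (fun _ => μ))
        (∫ u in {u | StrictMono u}, g u ∂Measure.pi (fun _ => μ)) =
      ∑ σ : Equiv.Perm (Fin (m + n)) with IsShuffle σ,
        ∫ u in {u | StrictMono u},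
          B (f (u ∘ σ ∘ Fin.castAdd n)) (g (u ∘ σ ∘ Fin.natAdd m)) ∂Measure.pi (fun _ => μ) := by
  have hC (k : ℕ) : MeasurableSet {u : Fin k → α | StrictMono u} := measurableSet_setOf_strictMono
  rw [← integrable_indicator_iff (hC _)] at hf hg
  rw [← integral_indicator (hC m), ← integral_indicator (hC n), ← integral_pi_fin_add_bilin B hf hg,
    integral_pi_eq_sum_perm μ (integrable_pi_fin_add_bilin B hf hg), Finset.sum_filter]
  refine Finset.sum_congr rfl fun σ _ => ?_
  simp only [Function.comp_assoc]
  rw [setIntegral_congr_fun (hC _) fun u hu => bilin_indicator_strictMono_comp B f g hu σ]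
  split_ifs
  · rfl
  · exact integral_zero _ _

end IncreasingPoints

lemma restrict_simplexSet (m : ℕ) (s t : ℝ) :
    volume.restrict (simplexSet m s t) =
      (Measure.pi fun _ => volume.restrict (Set.Ioo s t)).restrict {u | StrictMono u} := by
  have h : simplexSet m s t = {u | StrictMono u} ∩ Set.univ.pi fun _ => Set.Ioo s t := by
    ext u
    simp only [simplexSet, Set.mem_inter_iff, Set.mem_ofPred_eq, Set.mem_univ_pi]
  rw [h, ← Measure.restrict_restrict measurableSet_setOf_strictMono, volume_pi,
    Measure.restrict_pi_pi]

open Classical in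
/-- The shuffle-product formula:
`(∫_{Λ^m_{s,t}} f)(∫_{Λ^n_{s,t}} g) = Σ_{σ ∈ S(m,n)} ∫_{Λ^{m+n}_{s,t}} f(u_{σ(1:m)}) g(u_{σ(m+1:m+n)}) du`,
where `S(m,n)` is the set of shuffle permutations of `{1, …, m+n}` that are increasing
on the first `m` and on the last `n` indices. -/
theorem integral_simplex_mul_integral_simplex_eq_sum_shuffles
    (T : ℝ) (hT : 0 < T) (s t : ℝ) (hs : 0 ≤ s) (hst : s < t) (htT : t ≤ T)
    (m n : ℕ) (hm : 1 ≤ m) (hn : 1 ≤ n)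
    (f : (Fin m → ℝ) → ℝ) (g : (Fin n → ℝ) → ℝ)
    (hf : IntegrableOn f (simplexSet m s t))
    (hg : IntegrableOn g (simplexSet n s t)) :
    (∫ u in simplexSet m s t, f u) * (∫ u in simplexSet n s t, g u) =
      ∑ σ : Equiv.Perm (Fin (m + n)),
        if (StrictMono fun i : Fin m => σ (Fin.castAdd n i)) ∧
            (StrictMono fun j : Fin n => σ (Fin.natAdd m j)) then
          ∫ u in simplexSet (m + n) s t,
            f (fun i : Fin m => u (σ (Fin.castAdd n i))) *
              g (fun j : Fin n => u (σ (Fin.natAdd m j)))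
        else 0 := by
  rw [IntegrableOn, restrict_simplexSet] at hf hg
  simp only [restrict_simplexSet, ← Finset.sum_filter]
  exact integral_simplex_mul_integral_simplex_eq_sum_shuffles_general _ (.mul ℝ ℝ) hf hg
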